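/- For all positive integers d and n, one has Σ_{k=1}^{⌊(n+1)/2⌋} C(n, 2k−1) / (2k−1)^d = ζ*_n({1}_d; 2)/2. -/

import Mathlib

/-- `ent m α` is the entry `n_{α+1}` (0-indexed access) of the index tuple `m`,
with junk value `1` out of range. -/
def ent {L : ℕ} (m : Fin L → ℕ) (α : ℕ) : ℕ :=
  if h : α < L then m ⟨α, h⟩ else 1

/-- The finite set of index tuples `(n₁,…,n_L)` with `n ≥ n₁ ≥ n₂ ≥ ⋯ ≥ n_L ≥ 1`. -/
def Idx (n L : ℕ) : Finset (Fin L → ℕ) :=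
  (Fintype.piFinset fun _ : Fin L => Finset.Icc 1 n).filter
    fun m => ∀ i j : Fin L, i ≤ j → m j ≤ m i

/-- Generalized multiple harmonic-star value
`ζ*_k(s₁,…,s_d; a) = ∑_{k ≥ n₁ ≥ ⋯ ≥ n_d ≥ 1} a^{n_d}/(n₁^{s₁} ⋯ n_d^{s_d})`. -/
noncomputable def zetaStarK (k : ℕ) (s : List ℕ) (a : ℝ) : ℝ :=
  ∑ m ∈ Idx k s.length,
    a ^ ent m (s.length - 1) / ∏ i : Fin s.length, (m i : ℝ) ^ s.get i

/-- Mneimneh-like sum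
`M_n^{(s₁,…,s_d)}(a,p) = ∑_{k=1}^n C(n,k)·p^k·(1-p)^{n-k}·ζ*_k(s;a)`. -/
noncomputable def M (n : ℕ) (s : List ℕ) (a p : ℝ) : ℝ :=
  ∑ k ∈ Finset.Icc 1 n, (n.choose k : ℝ) * p ^ k * (1 - p) ^ (n - k) * zetaStarK k s a

noncomputable def GG (L n : ℕ) : ℝ :=
  ∑ m ∈ Idx n L, (2 : ℝ) ^ ent m (L - 1) / ∏ i : Fin L, (m i : ℝ)

noncomputable def TT (N d n : ℕ) : ℝ :=
  ∑ k ∈ Finset.range N, (n.choose (2 * k + 1) : ℝ) / ((2 * k + 1 : ℕ) : ℝ) ^ d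

theorem zeta_eq_GG_aux (n : ℕ) (s : List ℕ) (h : ∀ i, s.get i = 1) :
    zetaStarK n s 2 = GG s.length n := by
  unfold zetaStarK GG
  refine Finset.sum_congr rfl fun m _ => ?_
  congr 1
  refine Finset.prod_congr rfl fun i _ => ?_
  rw [h i, pow_one]

theorem zeta_eq_GG (n d : ℕ) : zetaStarK n (List.replicate d 1) 2 = GG d n := by
  rw [zeta_eq_GG_aux n _ (by intro i; simp), List.length_replicate]

theorem mem_Idx {n L : ℕ} {m : Fin L → ℕ} :
    m ∈ Idx n L ↔ (∀ i, 1 ≤ m i ∧ m i ≤ n) ∧ ∀ i j : Fin L, i ≤ j → m j ≤ m i := by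
  simp [Idx]

theorem sum_Idx_succ (n L : ℕ) (f : (Fin (L + 1) → ℕ) → ℝ) :
    ∑ m ∈ Idx n (L + 1), f m =
      ∑ j ∈ Finset.Icc 1 n, ∑ m ∈ Idx j L, f (Fin.cons j m : Fin (L + 1) → ℕ) := by
  rw [Finset.sum_sigma']
  symm
  refine Finset.sum_bij' (fun p _ => (Fin.cons p.1 p.2 : Fin (L + 1) → ℕ))
    (fun m _ => ⟨m 0, Fin.tail m⟩) ?_ ?_ ?_ ?_ ?_
  · rintro ⟨j, m⟩ h
    simp only [Finset.mem_sigma, Finset.mem_Icc, mem_Idx] at h ⊢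
    obtain ⟨⟨h1, h2⟩, h3, h4⟩ := h
    constructor
    · intro i
      refine Fin.cases ?_ (fun i => ?_) i
      · simpa using ⟨h1, h2⟩
      · simpa using ⟨(h3 i).1, (h3 i).2.trans h2⟩
    · intro i k
      refine Fin.cases ?_ (fun i => ?_) i <;> refine Fin.cases ?_ (fun k => ?_) k
      · simp
      · intro _; simpa using (h3 k).2
      · intro h; simp at h
      · intro h; simpa using h4 i k (by simpa using h)
  · intro m h
    simp only [Finset.mem_sigma, Finset.mem_Icc, mem_Idx] at h ⊢
    obtain ⟨h3, h4⟩ := h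
    refine ⟨h3 0, fun i => ⟨(h3 _).1, h4 _ _ (Fin.zero_le _)⟩, fun i j hij => h4 _ _ ?_⟩
    simpa using hij
  · rintro ⟨j, m⟩ h
    simp
  · intro m h
    simp
  · rintro ⟨j, m⟩ h
    rfl

theorem GG_one (n : ℕ) : GG 1 n = ∑ j ∈ Finset.Icc 1 n, (2 : ℝ) ^ j / j := by
  unfold GG
  rw [sum_Idx_succ]
  refine Finset.sum_congr rfl fun j _ => ?_
  have : Idx j 0 = Finset.univ := by
    ext m
    exact ⟨fun _ => Finset.mem_univ _, fun _ => mem_Idx.2 ⟨fun i => i.elim0, fun i => i.elim0⟩⟩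
  rw [this]
  simp [ent]

theorem GG_succ (L n : ℕ) :
    GG (L + 2) n = ∑ j ∈ Finset.Icc 1 n, GG (L + 1) j / j := by
  unfold GG
  rw [sum_Idx_succ]
  refine Finset.sum_congr rfl fun j _ => ?_
  rw [Finset.sum_div]
  refine Finset.sum_congr rfl fun m _ => ?_
  have : ent (Fin.cons j m : Fin (L + 2) → ℕ) (L + 2 - 1) = ent m (L + 1 - 1) := by
    simp only [ent]
    rw [dif_pos (by omega), dif_pos (by omega)]
    exact Fin.cons_succ (α := fun _ => ℕ) j m ⟨L, by omega⟩
  rw [this, Fin.prod_univ_succ, div_div]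
  simp only [Fin.cons_zero, Fin.cons_succ]
  rw [mul_comm]

theorem TT_zero (N d : ℕ) : TT N d 0 = 0 := by
  unfold TT
  simp

theorem TT_succ (N d n : ℕ) :
    TT N (d + 1) (n + 1) = TT N (d + 1) n + TT N d (n + 1) / ((n + 1 : ℕ) : ℝ) := by
  unfold TT
  rw [Finset.sum_div, ← Finset.sum_add_distrib]
  refine Finset.sum_congr rfl fun k _ => ?_
  have h := Nat.add_one_mul_choose_eq n (2 * k)
  have h' : ((n + 1 : ℕ) : ℝ) * (n.choose (2 * k) : ℝ) =
      ((n + 1).choose (2 * k + 1) : ℝ) * ((2 * k + 1 : ℕ) : ℝ) := by exact_mod_cast h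
  have e : ((n + 1).choose (2 * k + 1) : ℝ) = n.choose (2 * k) + n.choose (2 * k + 1) := by
    exact_mod_cast Nat.choose_succ_succ n (2 * k)
  have p1 : ((n + 1 : ℕ) : ℝ) ≠ 0 := by positivity
  have p2 : ((2 * k + 1 : ℕ) : ℝ) ≠ 0 := by positivity
  have e2 : ((n + 1).choose (2 * k + 1) : ℝ) / ((n + 1 : ℕ) : ℝ)
      = (n.choose (2 * k) : ℝ) / ((2 * k + 1 : ℕ) : ℝ) := by
    rw [div_eq_div_iff p1 p2, ← h', mul_comm]
  rw [div_right_comm, e2, e, pow_succ, div_div, mul_comm ((2 * k + 1 : ℕ) : ℝ), add_div]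
  ring

theorem sum_pairs (N : ℕ) (f : ℕ → ℝ) :
    ∑ k ∈ Finset.range N, (f (2 * k) + f (2 * k + 1)) = ∑ i ∈ Finset.range (2 * N), f i := by
  induction N with
  | zero => simp
  | succ N ih =>
    rw [Finset.sum_range_succ, ih, show 2 * (N + 1) = 2 * N + 1 + 1 by ring,
      Finset.sum_range_succ, Finset.sum_range_succ]
    ring

theorem TT_base (N n : ℕ) (h : n + 1 ≤ N) : TT N 0 (n + 1) = 2 ^ n := by
  unfold TT
  have : ∀ k, ((n + 1).choose (2 * k + 1) : ℝ) / ((2 * k + 1 : ℕ) : ℝ) ^ 0 =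
      n.choose (2 * k) + n.choose (2 * k + 1) := by
    intro k
    rw [pow_zero, div_one]
    exact_mod_cast Nat.choose_succ_succ n (2 * k)
  simp only [this]
  rw [sum_pairs N (fun i => (n.choose i : ℝ))]
  have h2 : ∑ i ∈ Finset.range (n + 1), (n.choose i : ℝ) = 2 ^ n := by
    exact_mod_cast Nat.sum_range_choose n
  rw [← h2]
  symm
  refine Finset.sum_subset (Finset.range_mono (by omega)) fun i _ hi => ?_
  rw [Nat.choose_eq_zero_of_lt (by simpa using hi), Nat.cast_zero]

theorem TT_eq_GG (N d : ℕ) : ∀ n, n ≤ N → TT N (d + 1) n = GG (d + 1) n / 2 := by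
  induction d with
  | zero =>
    intro n
    induction n with
    | zero => intro _; rw [TT_zero, GG_one]; simp
    | succ n ih =>
      intro h
      rw [TT_succ, ih (by omega), TT_base N n h, GG_one, GG_one,
        Finset.sum_Icc_succ_top (by omega), pow_succ]
      ring
  | succ d ihd =>
    intro n
    induction n with
    | zero => intro _; rw [TT_zero, GG_succ]; simp
    | succ n ih =>
      intro h
      rw [TT_succ, ih (by omega), ihd _ h, GG_succ, GG_succ,
        Finset.sum_Icc_succ_top (by omega)]
      ring

/-- Odd counterpart of Dilcher's formula. -/
theorem stmt_8 (d n : ℕ) (hd : 0 < d) (hn : 0 < n) :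
    ∑ k ∈ Finset.Icc 1 ((n + 1) / 2),
        (n.choose (2 * k - 1) : ℝ) / ((2 * k - 1 : ℕ) : ℝ) ^ d =
      zetaStarK n (List.replicate d 1) 2 / 2 := by
  obtain ⟨d, rfl⟩ : ∃ e, d = e + 1 := ⟨d - 1, by omega⟩
  rw [zeta_eq_GG, ← TT_eq_GG n d n le_rfl]
  unfold TT
  have h1 : ∑ k ∈ Finset.range ((n + 1) / 2),
      (n.choose (2 * k + 1) : ℝ) / ((2 * k + 1 : ℕ) : ℝ) ^ (d + 1) =
      ∑ k ∈ Finset.range n,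
      (n.choose (2 * k + 1) : ℝ) / ((2 * k + 1 : ℕ) : ℝ) ^ (d + 1) := by
    refine Finset.sum_subset (Finset.range_mono (by omega)) fun i _ hi => ?_
    rw [Finset.mem_range] at hi
    rw [Nat.choose_eq_zero_of_lt (by omega), Nat.cast_zero, zero_div]
  rw [← h1]
  refine Finset.sum_bij' (fun k _ => k - 1) (fun k _ => k + 1) ?_ ?_ ?_ ?_ ?_
  · intro k hk
    simp only [Finset.mem_Icc, Finset.mem_range] at *
    omega
  · intro k hk
    simp only [Finset.mem_Icc, Finset.mem_range] at *
    omega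
  · intro k hk
    simp only [Finset.mem_Icc] at hk
    omega
  · intro k hk
    simp
  · intro k hk
    simp only [Finset.mem_Icc] at hk
    rw [show 2 * (k - 1) + 1 = 2 * k - 1 by omega]
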